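/- For τ ∈ ℍ, let t(τ) = (e₃(τ) − e₁(τ))/(e₂(τ) − e₁(τ)). Then t is a holomorphic function on ℍ and satisfies dt/dτ = −(i/π) t(τ)(t(τ) − 1)(e₂(τ) − e₁(τ)). -/

import Mathlib

open Complex Filter Topology Asymptotics

noncomputable section

/-- membership in the lattice `Λ_τ = ℤ + τℤ`. -/
def InLattice (τ z : ℂ) : Prop := ∃ m n : ℤ, z = (m : ℂ) + (n : ℂ) * τ

/-- the half-period generators `ω₀ = 0, ω₁ = 1, ω₂ = τ, ω₃ = 1 + τ`. -/
def halfp (τ : ℂ) : Fin 4 → ℂ := ![0, 1, τ, 1 + τ]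

/-- the Weierstrass elliptic function `℘(z|τ)`. -/
def wp (τ z : ℂ) : ℂ :=
  z⁻¹ ^ 2 + ∑' w : {w : ℤ × ℤ // w ≠ 0},
    ((z - ((w.1.1 : ℂ) + (w.1.2 : ℂ) * τ))⁻¹ ^ 2 - ((w.1.1 : ℂ) + (w.1.2 : ℂ) * τ)⁻¹ ^ 2)

/-- `℘′(z|τ)`, the `z`-derivative of `℘`. -/
def wpd (τ z : ℂ) : ℂ := deriv (wp τ) z

/-- `℘″(z|τ)`. -/
def wpdd (τ z : ℂ) : ℂ := deriv (wpd τ) z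

def e1 (τ : ℂ) : ℂ := wp τ (1 / 2)
def e2 (τ : ℂ) : ℂ := wp τ (τ / 2)
def e3 (τ : ℂ) : ℂ := wp τ ((1 + τ) / 2)

def g2 (τ : ℂ) : ℂ := -4 * (e1 τ * e2 τ + e1 τ * e3 τ + e2 τ * e3 τ)

/-- `zeta` is the Weierstrass zeta function: for each `τ ∈ ℍ`, `zeta τ` is odd, satisfies
`∂ζ/∂z = -℘` off the lattice, and `ζ(z|τ) - 1/z → 0` as `z → 0`. -/
def IsWeierstrassZeta (zeta : ℂ → ℂ → ℂ) : Prop :=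
  ∀ τ : ℂ, 0 < τ.im →
    (∀ z : ℂ, zeta τ (-z) = - zeta τ z) ∧
    (∀ z : ℂ, ¬ InLattice τ z → HasDerivAt (zeta τ) (- wp τ z) z) ∧
    Tendsto (fun z => zeta τ z - z⁻¹) (𝓝[≠] (0 : ℂ)) (𝓝 0)

/-- `eta1 τ = ζ(z+1|τ) - ζ(z|τ)` is the first quasi-period. -/
def IsEta1 (zeta : ℂ → ℂ → ℂ) (eta1 : ℂ → ℂ) : Prop :=
  ∀ τ : ℂ, 0 < τ.im → ∀ z : ℂ, ¬ InLattice τ z →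
    eta1 τ = zeta τ (z + 1) - zeta τ z

/-- `eta2 τ = ζ(z+τ|τ) - ζ(z|τ)` is the second quasi-period. -/
def IsEta2 (zeta : ℂ → ℂ → ℂ) (eta2 : ℂ → ℂ) : Prop :=
  ∀ τ : ℂ, 0 < τ.im → ∀ z : ℂ, ¬ InLattice τ z →
    eta2 τ = zeta τ (z + τ) - zeta τ z

/-- `sigma` is the Weierstrass sigma function: entire, odd, with
`∂/∂z log σ = ζ` off the lattice and `σ(z|τ)/z → 1` as `z → 0`. -/
def IsWeierstrassSigma (zeta sigma : ℂ → ℂ → ℂ) : Prop :=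
  ∀ τ : ℂ, 0 < τ.im →
    (∀ z : ℂ, sigma τ (-z) = - sigma τ z) ∧
    Differentiable ℂ (sigma τ) ∧
    (∀ z : ℂ, ¬ InLattice τ z → HasDerivAt (sigma τ) (zeta τ z * sigma τ z) z) ∧
    Tendsto (fun z => sigma τ z / z) (𝓝[≠] (0 : ℂ)) (𝓝 1)

/-- the Hamiltonian system (142) for `(p(τ), A(τ))` on `V`. -/
def HamSystem (n : Fin 4 → ℂ) (zeta : ℂ → ℂ → ℂ) (eta1 : ℂ → ℂ)
    (V : Set ℂ) (p A : ℂ → ℂ) : Prop :=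
  ∀ τ ∈ V,
    HasDerivAt p ((-Complex.I / (4 * (Real.pi : ℂ))) *
      (2 * A τ - zeta τ (2 * p τ) + 2 * p τ * eta1 τ)) τ ∧
    HasDerivAt A ((Complex.I / (4 * (Real.pi : ℂ))) *
      ((2 * wp τ (2 * p τ) + 2 * eta1 τ) * A τ - (3 / 2) * wpd τ (2 * p τ)
        - ∑ k : Fin 4, n k * (n k + 1) * wpd τ (p τ + halfp τ k / 2))) τ

/-- the generalized Lamé potential `I(z;τ)`. -/
def Ipot (n : Fin 4 → ℂ) (zeta : ℂ → ℂ → ℂ) (A B p τ z : ℂ) : ℂ :=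
  (∑ k : Fin 4, n k * (n k + 1) * wp τ (z + halfp τ k / 2))
    + (3 / 4) * (wp τ (z + p) + wp τ (z - p))
    + A * (zeta τ (z + p) - zeta τ (z - p)) + B

end

lemma isOpen_im_pos : IsOpen {τ : ℂ | 0 < τ.im} := isOpen_lt continuous_const continuous_im

lemma eventually_im_pos : ∀ᶠ τ : ℂ in comap im atTop, 0 < τ.im :=
  tendsto_comap.eventually (eventually_gt_atTop 0)

instance comap_im_atTop_neBot : (comap im atTop).NeBot := by
  refine comap_neBot fun s hs ↦ ?_
  obtain ⟨y, hy⟩ := nonempty_of_mem hs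
  exact ⟨y * I, by simpa using hy⟩

/-- The period pair `(1, τ)`. -/
noncomputable def periodPairOfIm {τ : ℂ} (hτ : 0 < τ.im) : PeriodPair where
  ω₁ := 1
  ω₂ := τ
  indep := by
    rw [LinearIndependent.pair_iff]
    intro s t h
    have him := congrArg Complex.im h
    have hre := congrArg Complex.re h
    simp at him hre
    have ht : t = 0 := by grind
    simp_all

lemma wp_eq_weierstrassP {τ : ℂ} (hτ : 0 < τ.im) (z : ℂ) :
    wp τ z = (periodPairOfIm hτ).weierstrassP z := by
  set L := periodPairOfIm hτ
  set f : ℤ × ℤ → ℂ := fun w ↦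
    (z - ((w.1 : ℂ) + (w.2 : ℂ) * τ))⁻¹ ^ 2 - ((w.1 : ℂ) + (w.2 : ℂ) * τ)⁻¹ ^ 2
  have hf : HasSum f (L.weierstrassP z) := by
    convert (L.latticeEquivProd.symm.toEquiv.hasSum_iff).2 (L.hasSum_weierstrassP z) using 1
    ext w
    have := L.latticeEquiv_symm_apply w
    have h₁ : L.ω₁ = 1 := rfl
    have h₂ : L.ω₂ = τ := rfl
    simp [f, this, h₁, h₂]
  have h0 := hf.summable.tsum_subtype_add_tsum_subtype_compl {(0 : ℤ × ℤ)}
  rw [hf.tsum_eq, tsum_singleton] at h0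
  rw [← h0, wp]
  congr 1
  simp [f]

lemma hasSum_wp_sub_wp {τ : ℂ} (hτ : 0 < τ.im) (z z' : ℂ) :
    HasSum (fun w : ℤ × ℤ ↦ (z - ((w.1 : ℂ) + (w.2 : ℂ) * τ))⁻¹ ^ 2 -
      (z' - ((w.1 : ℂ) + (w.2 : ℂ) * τ))⁻¹ ^ 2) (wp τ z - wp τ z') := by
  set L := periodPairOfIm hτ
  rw [wp_eq_weierstrassP hτ, wp_eq_weierstrassP hτ]
  have h := (L.latticeEquivProd.symm.toEquiv.hasSum_iff).2
    ((L.hasSum_weierstrassP z).sub (L.hasSum_weierstrassP z'))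
  refine h.congr_fun fun w ↦ ?_
  have := L.latticeEquiv_symm_apply w
  have h₁ : L.ω₁ = 1 := rfl
  have h₂ : L.ω₂ = τ := rfl
  simp [this, h₁, h₂]

lemma wp_add_int_add_int_mul {τ : ℂ} (hτ : 0 < τ.im) (z : ℂ) (m n : ℤ) :
    wp τ (z + (m + n * τ)) = wp τ z := by
  rw [wp_eq_weierstrassP hτ, wp_eq_weierstrassP hτ]
  exact (periodPairOfIm hτ).weierstrassP_add_coe z
    ⟨_, PeriodPair.mem_lattice.2 ⟨m, n, by simp [periodPairOfIm]⟩⟩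

lemma wp_neg {τ : ℂ} (hτ : 0 < τ.im) (z : ℂ) : wp τ (-z) = wp τ z := by
  rw [wp_eq_weierstrassP hτ, wp_eq_weierstrassP hτ, PeriodPair.weierstrassP_neg]

lemma wp_add_one (τ z : ℂ) : wp (τ + 1) z = wp τ z := by
  let e : ℤ × ℤ ≃ ℤ × ℤ :=
    ⟨fun w ↦ (w.1 - w.2, w.2), fun w ↦ (w.1 + w.2, w.2), fun w ↦ by simp, fun w ↦ by simp⟩
  let e' : {w : ℤ × ℤ // w ≠ 0} ≃ {w : ℤ × ℤ // w ≠ 0} :=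
    e.subtypeEquiv fun w ↦ by
      obtain ⟨m, n⟩ := w
      simp only [e, ne_eq, Prod.mk_eq_zero, Equiv.coe_fn_mk]
      grind
  rw [wp, wp, ← e'.tsum_eq]
  congr 2
  ext w
  simp only [e', e, Equiv.subtypeEquiv_apply, Equiv.coe_fn_mk]
  push_cast
  ring_nf

lemma wp_neg_one_div {τ : ℂ} (hτ : τ ≠ 0) (z : ℂ) : wp (-1 / τ) z = τ ^ 2 * wp τ (τ * z) := by
  let e : ℤ × ℤ ≃ ℤ × ℤ :=
    ⟨fun w ↦ (-w.2, w.1), fun w ↦ (w.2, -w.1), fun w ↦ by simp, fun w ↦ by simp⟩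
  let e' : {w : ℤ × ℤ // w ≠ 0} ≃ {w : ℤ × ℤ // w ≠ 0} :=
    e.subtypeEquiv fun w ↦ by
      obtain ⟨m, n⟩ := w
      simp only [e, ne_eq, Prod.mk_eq_zero, Equiv.coe_fn_mk]
      grind
  have key (x : ℂ) : x⁻¹ ^ 2 = τ ^ 2 * (τ * x)⁻¹ ^ 2 := by
    field_simp
  rw [wp, wp, mul_add, ← tsum_mul_left, ← e'.tsum_eq fun w : {w : ℤ × ℤ // w ≠ 0} ↦ τ ^ 2 * _,
    ← key]
  congr 2
  ext w
  simp only [e', e, Equiv.subtypeEquiv_apply, Equiv.coe_fn_mk]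
  rw [key (z - _), key (_ + _), mul_sub]
  push_cast
  field_simp
  ring

lemma im_neg_one_div_pos {τ : ℂ} (hτ : 0 < τ.im) : 0 < (-1 / τ).im := by
  have : 0 < normSq τ := normSq_pos.2 (by rintro rfl; simp at hτ)
  rw [neg_div, one_div, neg_im, inv_im]
  have := div_pos hτ this
  rw [neg_div, neg_neg]; exact this

lemma e1_add_one (τ : ℂ) : e1 (τ + 1) = e1 τ := wp_add_one _ _

lemma e2_add_one (τ : ℂ) : e2 (τ + 1) = e3 τ := by
  rw [e2, wp_add_one, e3, add_comm]

lemma e3_add_one {τ : ℂ} (hτ : 0 < τ.im) : e3 (τ + 1) = e2 τ := by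
  rw [e3, wp_add_one, e2, ← wp_add_int_add_int_mul hτ (τ / 2) 1 0]
  congr 1
  push_cast
  ring

lemma e1_neg_one_div {τ : ℂ} (hτ : 0 < τ.im) : e1 (-1 / τ) = τ ^ 2 * e2 τ := by
  rw [e1, wp_neg_one_div (by rintro rfl; simp at hτ), e2, mul_one_div]

lemma e2_neg_one_div {τ : ℂ} (hτ : 0 < τ.im) : e2 (-1 / τ) = τ ^ 2 * e1 τ := by
  have h0 : τ ≠ 0 := by rintro rfl; simp at hτ
  rw [e2, wp_neg_one_div h0, e1, ← wp_neg hτ]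
  congr 2
  field_simp

lemma e3_neg_one_div {τ : ℂ} (hτ : 0 < τ.im) : e3 (-1 / τ) = τ ^ 2 * e3 τ := by
  have h0 : τ ≠ 0 := by rintro rfl; simp at hτ
  rw [e3, wp_neg_one_div h0, e3, ← wp_add_int_add_int_mul hτ _ 1 0]
  congr 2
  push_cast
  field_simp
  ring

lemma abs_im_le_norm_sin (w : ℂ) : |w.im| ≤ ‖sin w‖ := by
  have h1 : normSq (sin w) = Real.sin w.re ^ 2 + Real.sinh w.im ^ 2 := by
    rw [Complex.sin_eq, ← ofReal_sin, ← ofReal_cos, ← ofReal_cosh, ← ofReal_sinh, ← ofReal_mul,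
      ← ofReal_mul, normSq_add_mul_I, mul_pow, mul_pow, Real.cosh_sq, Real.cos_sq']
    ring
  rw [← sq_le_sq₀ (abs_nonneg _) (norm_nonneg _), ← normSq_eq_norm_sq, h1]
  have h2 : |w.im| ≤ |Real.sinh w.im| := by
    rw [Real.abs_sinh]
    exact Real.self_le_sinh_iff.2 (abs_nonneg _)
  have h3 : |w.im| ^ 2 ≤ |Real.sinh w.im| ^ 2 := by gcongr
  rw [sq_abs (Real.sinh _)] at h3
  nlinarith [sq_nonneg (Real.sin w.re)]

lemma sin_pi_mul_ne_zero_of_im_ne_zero {u : ℂ} (hu : u.im ≠ 0) : sin (Real.pi * u) ≠ 0 := by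
  have h := abs_im_le_norm_sin (Real.pi * u)
  rw [im_ofReal_mul] at h
  exact norm_pos_iff.1 (h.trans_lt' (abs_pos.2 (mul_ne_zero Real.pi_ne_zero hu)))

lemma norm_pi_div_sin_sq_le {u : ℂ} (hu : u.im ≠ 0) :
    ‖(Real.pi / sin (Real.pi * u)) ^ 2‖ ≤ (u.im ^ 2)⁻¹ := by
  have h := abs_im_le_norm_sin (Real.pi * u)
  rw [im_ofReal_mul, abs_mul, abs_of_pos Real.pi_pos] at h
  rw [norm_pow, norm_div, norm_real, Real.norm_of_nonneg Real.pi_pos.le, ← inv_pow,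
    ← sq_abs u.im⁻¹, abs_inv]
  have hu' := abs_pos.2 hu
  gcongr
  rw [div_le_iff₀ (h.trans_lt' (by positivity)), le_inv_mul_iff₀ hu']
  linarith

lemma summable_inv_sub_int_sq (u : ℂ) : Summable fun m : ℤ ↦ (u - m)⁻¹ ^ 2 := by
  have h := EisensteinSeries.linear_right_summable (-u) 1 le_rfl
  refine h.congr fun m ↦ ?_
  rw [inv_pow, ← neg_sq]
  congr 1
  push_cast
  norm_cast
  ring_nf

lemma tsum_inv_sub_int_sq_of_im_pos {u : ℂ} (hu : 0 < u.im) :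
    ∑' m : ℤ, (u - m)⁻¹ ^ 2 = (Real.pi / sin (Real.pi * u)) ^ 2 := by
  have h := iteratedDerivWithin_cot_pi_mul_eq_mul_tsum_div_pow le_rfl hu
  have hs := sin_pi_mul_ne_zero_of_im_ne_zero hu.ne'
  rw [iteratedDerivWithin_one,
    derivWithin_of_isOpen UpperHalfPlane.isOpen_upperHalfPlaneSet hu] at h
  have hd : HasDerivAt (fun x : ℂ ↦ Real.pi * cot (Real.pi * x))
      (-(Real.pi / sin (Real.pi * u)) ^ 2) u := by
    have h1 : HasDerivAt (fun x : ℂ ↦ Real.pi * x) (Real.pi : ℂ) u := by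
      simpa using (hasDerivAt_id u).const_mul (Real.pi : ℂ)
    refine ((h1.ccos.fun_div h1.csin hs).const_mul (Real.pi : ℂ)).congr_deriv ?_
    field_simp
    linear_combination (-1) * (Complex.sin_sq_add_cos_sq (Real.pi * u))
  rw [hd.deriv] at h
  rw [← (Equiv.neg ℤ).tsum_eq]
  simp at h ⊢
  rw [h]

lemma tsum_inv_sub_int_sq {u : ℂ} (hu : u.im ≠ 0) :
    ∑' m : ℤ, (u - m)⁻¹ ^ 2 = (Real.pi / sin (Real.pi * u)) ^ 2 := by
  rcases hu.lt_or_gt with h | h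
  · have := tsum_inv_sub_int_sq_of_im_pos (u := -u) (by simpa using h)
    rw [← (Equiv.neg ℤ).tsum_eq] at this
    rw [mul_neg, Complex.sin_neg, div_neg, neg_sq] at this
    rw [← this]
    congr 1
    ext m
    rw [← neg_sq]
    congr 1
    rw [← inv_neg]
    simp
    ring
  · exact tsum_inv_sub_int_sq_of_im_pos h

lemma tsum_inv_half_sub_int_sq : ∑' m : ℤ, ((1 / 2 : ℂ) - m)⁻¹ ^ 2 = (Real.pi : ℂ) ^ 2 := by
  have hu : Tendsto (fun y : ℝ ↦ (1 / 2 : ℂ) + y * I) (𝓝[>] 0) (𝓝 (1 / 2)) := by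
    have : Continuous fun y : ℝ ↦ (1 / 2 : ℂ) + y * I := by fun_prop
    simpa using (this.tendsto 0).mono_left nhdsWithin_le_nhds
  have hne (m : ℤ) : (1 / 2 : ℂ) - m ≠ 0 := by
    intro h
    have h2 : (2 * m : ℂ) = 1 := by linear_combination (-2) * h
    norm_cast at h2
    omega
  have h1 : Tendsto (fun y : ℝ ↦ ∑' m : ℤ, ((1 / 2 : ℂ) + y * I - m)⁻¹ ^ 2) (𝓝[>] 0)
      (𝓝 (∑' m : ℤ, ((1 / 2 : ℂ) - m)⁻¹ ^ 2)) := by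
    refine tendsto_tsum_of_dominated_convergence
      (summable_inv_sub_int_sq (1 / 2)).norm (fun m ↦ ?_) (.of_forall fun y m ↦ ?_)
    · exact ((hu.sub_const _).inv₀ (hne m)).pow 2
    · rw [norm_pow, norm_pow, norm_inv, norm_inv]
      have h0 := norm_pos_iff.2 (hne m)
      gcongr
      have hre : (1 / 2 : ℂ) - m = ((1 / 2 - m : ℝ) : ℂ) := by push_cast; ring
      calc ‖(1 / 2 : ℂ) - m‖ = |((1 / 2 : ℂ) + y * I - m).re| := by
            rw [hre, norm_real]; simp
        _ ≤ _ := abs_re_le_norm _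
  have h2 : Tendsto (fun u : ℂ ↦ (Real.pi / sin (Real.pi * u)) ^ 2) (𝓝 (1 / 2))
      (𝓝 ((Real.pi / sin (Real.pi * (1 / 2))) ^ 2)) := by
    have : sin (Real.pi * (1 / 2)) ≠ 0 := by rw [mul_one_div]; simp
    have : ContinuousAt (fun u : ℂ ↦ (Real.pi / sin (Real.pi * u)) ^ 2) (1 / 2) := by
      fun_prop (disch := assumption)
    exact this
  rw [mul_one_div, sin_pi_div_two, div_one] at h2
  refine tendsto_nhds_unique (h1.congr' ?_) (h2.comp hu)
  filter_upwards [self_mem_nhdsWithin] with y hy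
  exact tsum_inv_sub_int_sq (by simpa using (Set.mem_Ioi.1 hy).ne')

/-- The `n`-th term of the expansion of `℘(x + τ/2) - ℘(1/2)` as a series of squared cosecants. -/
noncomputable def cscSqTerm (x : ℝ) (n : ℤ) (τ : ℂ) : ℂ :=
  (Real.pi / sin (Real.pi * (x + τ / 2 - n * τ))) ^ 2 -
    (Real.pi / sin (Real.pi * (1 / 2 - n * τ))) ^ 2

lemma half_sub_int_ne_zero (n : ℤ) : (1 / 2 - n : ℝ) ≠ 0 := by
  intro h
  have h2 : (2 * n : ℝ) = 1 := by linear_combination (-2) * h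
  norm_cast at h2
  omega

lemma im_add_half_sub_int_mul (x : ℝ) (n : ℤ) (τ : ℂ) :
    (x + τ / 2 - n * τ).im = (1 / 2 - n) * τ.im := by
  have : τ / 2 = ((1 / 2 : ℝ) : ℂ) * τ := by push_cast; ring
  have h2 : (n : ℂ) * τ = ((n : ℝ) : ℂ) * τ := by push_cast; ring
  rw [this, h2, sub_im, add_im, im_ofReal_mul, im_ofReal_mul, ofReal_im]
  ring

lemma im_half_sub_int_mul (n : ℤ) (τ : ℂ) : (1 / 2 - n * τ).im = -n * τ.im := by
  have h2 : (n : ℂ) * τ = ((n : ℝ) : ℂ) * τ := by push_cast; ring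
  rw [h2, sub_im, im_ofReal_mul]
  simp

lemma hasSum_cscSqTerm {τ : ℂ} (hτ : 0 < τ.im) (x : ℝ) :
    HasSum (fun n : ℤ ↦ cscSqTerm x n τ) (wp τ (x + τ / 2) - wp τ (1 / 2)) := by
  have h := (Equiv.prodComm ℤ ℤ).hasSum_iff.2 (hasSum_wp_sub_wp hτ (x + τ / 2) (1 / 2))
  refine h.prod_fiberwise fun n ↦ ?_
  have h1 : ∑' m : ℤ, (x + τ / 2 - n * τ - m)⁻¹ ^ 2 = _ :=
    tsum_inv_sub_int_sq (u := x + τ / 2 - n * τ) (by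
      rw [im_add_half_sub_int_mul]
      exact mul_ne_zero (half_sub_int_ne_zero n) hτ.ne')
  have h2 : ∑' m : ℤ, (1 / 2 - n * τ - m)⁻¹ ^ 2 =
      (Real.pi / sin (Real.pi * (1 / 2 - n * τ))) ^ 2 := by
    rcases eq_or_ne n 0 with rfl | hn
    · simp only [Int.cast_zero, zero_mul, sub_zero]
      rw [tsum_inv_half_sub_int_sq, mul_one_div, sin_pi_div_two, div_one]
    · refine tsum_inv_sub_int_sq ?_
      rw [im_half_sub_int_mul]
      exact mul_ne_zero (by simpa using hn) hτ.ne'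
  have h3 := (summable_inv_sub_int_sq (x + τ / 2 - n * τ)).hasSum.sub
    (summable_inv_sub_int_sq (1 / 2 - n * τ)).hasSum
  rw [h1, h2] at h3
  refine h3.congr_fun fun m ↦ ?_
  simp only [Function.comp_apply, Equiv.prodComm_apply, Prod.swap_prod_mk]
  congr 3 <;> ring

lemma norm_cscSqTerm_le {δ : ℝ} (hδ : 0 < δ) {τ : ℂ} (hτ : δ < τ.im) (x : ℝ) (n : ℤ) :
    ‖cscSqTerm x n τ‖ ≤ (δ ^ 2)⁻¹ * ‖((1 / 2 : ℂ) - n)⁻¹ ^ 2‖ +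
      ((δ ^ 2)⁻¹ * ‖((0 : ℂ) - n)⁻¹ ^ 2‖ + if n = 0 then Real.pi ^ 2 else 0) := by
  have hτ0 := hδ.trans hτ
  refine (norm_sub_le _ _).trans (add_le_add ?_ ?_)
  · have hn := half_sub_int_ne_zero n
    refine (norm_pi_div_sin_sq_le ?_).trans ?_
    · rw [im_add_half_sub_int_mul]
      exact mul_ne_zero hn hτ0.ne'
    · have e : ((1 / 2 : ℂ) - n)⁻¹ ^ 2 = (((1 / 2 - n : ℝ) ^ 2)⁻¹ : ℝ) := by
        push_cast
        rw [inv_pow]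
      rw [im_add_half_sub_int_mul, e, norm_real, Real.norm_of_nonneg (by positivity), ← mul_inv,
        mul_pow, mul_comm (δ ^ 2)]
      gcongr
  · rcases eq_or_ne n 0 with rfl | hn
    · simp only [Int.cast_zero, zero_mul, sub_zero]
      rw [mul_one_div, sin_pi_div_two]
      simp
    · have hn' : (n : ℝ) ≠ 0 := by exact_mod_cast hn
      rw [if_neg hn, add_zero]
      refine (norm_pi_div_sin_sq_le ?_).trans ?_
      · rw [im_half_sub_int_mul]
        exact mul_ne_zero (by simpa using hn) hτ0.ne'
      · have e : ((0 : ℂ) - n)⁻¹ ^ 2 = (((n : ℝ) ^ 2)⁻¹ : ℝ) := by push_cast; ring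
        rw [im_half_sub_int_mul, e, norm_real, Real.norm_of_nonneg (by positivity), ← mul_inv,
          mul_pow, mul_comm (δ ^ 2), neg_sq]
        gcongr

lemma summable_cscSqTerm_bound (δ : ℝ) :
    Summable fun n : ℤ ↦ (δ ^ 2)⁻¹ * ‖((1 / 2 : ℂ) - n)⁻¹ ^ 2‖ +
      ((δ ^ 2)⁻¹ * ‖((0 : ℂ) - n)⁻¹ ^ 2‖ + if n = 0 then Real.pi ^ 2 else 0) :=
  ((summable_inv_sub_int_sq _).norm.mul_left _).add
    (((summable_inv_sub_int_sq _).norm.mul_left _).add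
      (hasSum_ite_eq (0 : ℤ) (Real.pi ^ 2)).summable)

lemma differentiableOn_cscSqTerm (x : ℝ) (n : ℤ) :
    DifferentiableOn ℂ (cscSqTerm x n) {τ : ℂ | 0 < τ.im} := by
  intro τ hτ
  have h1 : sin (Real.pi * (x + τ / 2 - n * τ)) ≠ 0 := by
    refine sin_pi_mul_ne_zero_of_im_ne_zero ?_
    rw [im_add_half_sub_int_mul]
    exact mul_ne_zero (half_sub_int_ne_zero n) (ne_of_gt hτ)
  have h2 : sin (Real.pi * (1 / 2 - n * τ)) ≠ 0 := by
    rcases eq_or_ne n 0 with rfl | hn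
    · simp only [Int.cast_zero, zero_mul, sub_zero]
      rw [mul_one_div, sin_pi_div_two]
      exact one_ne_zero
    · refine sin_pi_mul_ne_zero_of_im_ne_zero ?_
      rw [im_half_sub_int_mul]
      exact mul_ne_zero (by simpa using hn) (ne_of_gt hτ)
  refine DifferentiableAt.differentiableWithinAt ?_
  unfold cscSqTerm
  fun_prop (disch := assumption)

lemma differentiableOn_wp_sub_wp_half (x : ℝ) :
    DifferentiableOn ℂ (fun τ ↦ wp τ (x + τ / 2) - wp τ (1 / 2)) {τ : ℂ | 0 < τ.im} := by
  intro τ hτ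
  have hU : IsOpen {σ : ℂ | τ.im / 2 < σ.im} := isOpen_lt continuous_const continuous_im
  have hδ : 0 < τ.im / 2 := half_pos hτ
  have h := differentiableOn_tsum_of_summable_norm (summable_cscSqTerm_bound (τ.im / 2))
    (fun n ↦ (differentiableOn_cscSqTerm x n).mono fun σ hσ ↦ hδ.trans hσ) hU
    (fun n σ hσ ↦ norm_cscSqTerm_le hδ hσ x n)
  have h' := h.congr fun σ hσ ↦ (hasSum_cscSqTerm (hδ.trans hσ) x).tsum_eq.symm
  have hmem : τ ∈ {σ : ℂ | τ.im / 2 < σ.im} := half_lt_self (α := ℝ) hτ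
  exact ((h' τ hmem).differentiableAt (hU.mem_nhds hmem)).differentiableWithinAt

lemma tendsto_pi_div_sin_sq {u : ℂ → ℂ} {k : ℝ} (hk : k ≠ 0) (hu : ∀ τ, (u τ).im = k * τ.im) :
    Tendsto (fun τ ↦ (Real.pi / sin (Real.pi * u τ)) ^ 2) (comap im atTop) (𝓝 0) := by
  have h : Tendsto (fun τ : ℂ ↦ ((k * τ.im) ^ 2)⁻¹) (comap im atTop) (𝓝 0) := by
    have h1 : Tendsto (fun y : ℝ ↦ (k ^ 2 * y ^ 2)⁻¹) atTop (𝓝 0) :=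
      ((tendsto_pow_atTop two_ne_zero).const_mul_atTop (by positivity)).inv_tendsto_atTop
    simpa only [mul_pow, Function.comp_def] using h1.comp tendsto_comap
  refine squeeze_zero_norm' ?_ h
  filter_upwards [eventually_im_pos] with τ hτ
  rw [← hu]
  refine norm_pi_div_sin_sq_le ?_
  rw [hu]
  exact mul_ne_zero hk (ne_of_gt hτ)

lemma tendsto_wp_sub_wp_half (x : ℝ) :
    Tendsto (fun τ ↦ wp τ (x + τ / 2) - wp τ (1 / 2)) (comap im atTop)
      (𝓝 (-(Real.pi : ℂ) ^ 2)) := by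
  have h := tendsto_tsum_of_dominated_convergence (𝓕 := comap im atTop)
    (f := fun τ n ↦ cscSqTerm x n τ) (g := fun n : ℤ ↦ if n = 0 then -(Real.pi : ℂ) ^ 2 else 0)
    (summable_cscSqTerm_bound 1) (fun n ↦ ?_) ?_
  · rw [tsum_ite_eq] at h
    refine h.congr' ?_
    filter_upwards [eventually_im_pos] with τ hτ
    exact (hasSum_cscSqTerm hτ x).tsum_eq
  · have h1 := tendsto_pi_div_sin_sq (half_sub_int_ne_zero n) (im_add_half_sub_int_mul x n)
    rcases eq_or_ne n 0 with rfl | hn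
    · have h2 := h1.sub_const ((Real.pi : ℂ) ^ 2)
      rw [zero_sub] at h2
      simpa [cscSqTerm, ← div_eq_mul_inv] using h2
    · have h2 := h1.sub (tendsto_pi_div_sin_sq (k := -n) (by simpa using hn)
        (im_half_sub_int_mul n))
      simpa [hn, cscSqTerm] using h2
  · filter_upwards [tendsto_comap.eventually (eventually_gt_atTop 1)] with τ hτ n
    exact norm_cscSqTerm_le one_pos hτ x n

open ModularForm UpperHalfPlane MatrixGroups SlashInvariantForm in
lemma exists_eq_const_mul_discriminant {f : ℂ → ℂ}
    (hf : DifferentiableOn ℂ f {τ : ℂ | 0 < τ.im})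
    (hT : ∀ τ : ℂ, 0 < τ.im → f (τ + 1) = f τ)
    (hS : ∀ τ : ℂ, 0 < τ.im → f (-1 / τ) = τ ^ 12 * f τ)
    (h0 : Tendsto f (comap im atTop) (𝓝 0)) :
    ∃ c : ℂ, ∀ τ : ℍ, f τ = c * ModularForm.discriminant τ := by
  have hS' : ((fun z : ℍ ↦ f z) ∣[(12 : ℤ)] ModularGroup.S) = fun z : ℍ ↦ f z := by
    ext z
    have h := hS z z.im_pos
    have hz : (z : ℂ) ≠ 0 := z.ne_zero
    have hden : denom ModularGroup.S z = z := by
      rw [ModularGroup.denom_apply]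
      simp [ModularGroup.S]
    rw [SL_slash_apply, UpperHalfPlane.modular_S_smul, hden]
    have h1 : f (-(z : ℂ))⁻¹ = z ^ 12 * f z := by
      rw [← h]
      congr 1
      field_simp
    simp only
    rw [h1, zpow_neg, mul_right_comm]
    norm_cast
    rw [mul_inv_cancel₀ (pow_ne_zero 12 hz), one_mul]
  have hT' : ((fun z : ℍ ↦ f z) ∣[(12 : ℤ)] ModularGroup.T) = fun z : ℍ ↦ f z := by
    ext z
    have h := hT z z.im_pos
    have hden : denom ModularGroup.T z = 1 := by
      rw [ModularGroup.denom_apply]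
      simp [ModularGroup.T]
    rw [SL_slash_apply, modular_T_smul, hden, one_zpow, mul_one, coe_vadd, ← h, add_comm]
    simp
  have h0' : IsZeroAtImInfty fun z : ℍ ↦ f z := by
    refine h0.comp ?_
    rw [tendsto_comap_iff]
    exact tendsto_comap
  let F : CuspForm 𝒮ℒ 12 :=
    { toFun := fun z : ℍ ↦ f z
      slash_action_eq' := by
        rintro A ⟨A, rfl⟩
        exact slash_action_generators_SL2Z hS' hT' A
      holo' := by
        rw [UpperHalfPlane.mdifferentiable_iff]
        refine hf.congr fun z hz ↦ ?_
        simp [ofComplex_apply_of_im_pos hz]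
      zero_at_cusps' := by
        intro c hc
        rw [Subgroup.IsArithmetic.isCusp_iff_isCusp_SL2Z] at hc
        rw [OnePoint.isZeroAt_iff_forall_SL2Z hc]
        intro γ _
        rw [slash_action_generators_SL2Z hS' hT']
        exact h0' }
  obtain ⟨c, hc⟩ := CuspForm.exists_smul_discriminant_of_weight_eq_twelve F
  refine ⟨c, fun τ ↦ ?_⟩
  exact (DFunLike.congr_fun hc τ).symm

open Function.Periodic in
lemma exists_tendsto_div_qParam {f : ℂ → ℂ} {l : ℂ}
    (hf : DifferentiableOn ℂ f {τ : ℂ | 0 < τ.im})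
    (hper : ∀ τ : ℂ, 0 < τ.im → f (τ + 2) = f τ) (hl : Tendsto f (comap im atTop) (𝓝 l)) :
    ∃ d : ℂ, Tendsto (fun τ ↦ (f τ - l) / qParam 2 τ) (comap im atTop) (𝓝 d) ∧
      Tendsto (fun τ ↦ deriv f τ / qParam 2 τ) (comap im atTop) (𝓝 (Real.pi * I * d)) := by
  set g : ℂ → ℂ := fun τ ↦ if 0 < τ.im then f τ else 0 with hg
  have hpos := eventually_im_pos
  have hgf : ∀ τ : ℂ, 0 < τ.im → g τ = f τ := fun τ hτ ↦ if_pos hτ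
  have hgper : Function.Periodic g ((2 : ℝ) : ℂ) := by
    intro τ
    by_cases hτ : 0 < τ.im
    · rw [hgf τ hτ, hgf _ (by simpa using hτ)]
      simpa using hper τ hτ
    · simp [hg, hτ]
  have hgl : Tendsto g (comap im atTop) (𝓝 l) :=
    hl.congr' (hpos.mono fun τ hτ ↦ (hgf τ hτ).symm)
  have hgd : ∀ τ : ℂ, 0 < τ.im → DifferentiableAt ℂ g τ := fun τ hτ ↦
    ((hf.congr hgf) τ hτ).differentiableAt (isOpen_im_pos.mem_nhds hτ)
  have hgb : BoundedAtFilter (comap im atTop) g := hgl.isBigO_one ℝ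
  set F := cuspFunction 2 g
  have hF0 : DifferentiableAt ℂ F 0 :=
    differentiableAt_cuspFunction_zero two_pos hgper (hpos.mono hgd) hgb
  have hFan : AnalyticAt ℂ F 0 := by
    rw [Complex.analyticAt_iff_eventually_differentiableAt, ← nhdsNE_sup_pure, eventually_sup]
    exact ⟨eventually_differentiableAt_cuspFunction_nhds_ne_zero two_pos hgper (hpos.mono hgd),
      hF0⟩
  have hFq (τ : ℂ) (hτ : 0 < τ.im) : F (qParam 2 τ) = f τ := by
    exact (eq_cuspFunction two_ne_zero hgper τ).trans (hgf τ hτ)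
  have hq : Tendsto (qParam 2) (comap im atTop) (𝓝[≠] 0) := qParam_tendsto two_pos
  have hFl : F 0 = l := by
    exact tendsto_nhds_unique (tendsto_at_I_inf two_pos hgper (hpos.mono hgd) hgb) hgl
  refine ⟨deriv F 0, ?_, ?_⟩
  · refine ((hasDerivAt_iff_tendsto_slope.1 hF0.hasDerivAt).comp hq).congr' ?_
    filter_upwards [hpos] with τ hτ
    rw [Function.comp_apply, slope_def_field, hFl, hFq τ hτ, sub_zero]
  · have h1 : Tendsto (fun τ ↦ deriv F (qParam 2 τ)) (comap im atTop) (𝓝 (deriv F 0)) :=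
      hFan.deriv.continuousAt.tendsto.comp (hq.mono_right nhdsWithin_le_nhds)
    refine (h1.const_mul (Real.pi * I)).congr' ?_
    filter_upwards [hpos, (hq.mono_right nhdsWithin_le_nhds).eventually
      hFan.eventually_analyticAt] with τ hτ han
    have hq' : HasDerivAt (qParam 2) (qParam 2 τ * (Real.pi * I)) τ := by
      have h2 : HasDerivAt (fun z : ℂ ↦ 2 * Real.pi * I * z / (2 : ℝ)) (Real.pi * I) τ := by
        refine (((hasDerivAt_id τ).const_mul (2 * Real.pi * I)).div_const _).congr_deriv ?_
        push_cast
        ring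
      exact h2.cexp
    have h3 := han.differentiableAt.hasDerivAt.comp τ hq'
    have h4 : f =ᶠ[𝓝 τ] F ∘ qParam 2 := by
      filter_upwards [isOpen_im_pos.mem_nhds hτ] with σ hσ using (hFq σ hσ).symm
    rw [(h3.congr_of_eventuallyEq h4).deriv]
    have : qParam 2 τ ≠ 0 := exp_ne_zero _
    field_simp

/-- The difference `e₂ - e₁`. -/
noncomputable def e21 (τ : ℂ) : ℂ := e2 τ - e1 τ

/-- The difference `e₃ - e₁`. -/
noncomputable def e31 (τ : ℂ) : ℂ := e3 τ - e1 τ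

lemma e21_eq (τ : ℂ) : e21 τ = wp τ ((0 : ℝ) + τ / 2) - wp τ (1 / 2) := by
  simp [e21, e2, e1]

lemma e31_eq (τ : ℂ) : e31 τ = wp τ ((1 / 2 : ℝ) + τ / 2) - wp τ (1 / 2) := by
  rw [e31, e3, e1, add_div]
  push_cast
  rfl

lemma differentiableOn_e21 : DifferentiableOn ℂ e21 {τ : ℂ | 0 < τ.im} :=
  (differentiableOn_wp_sub_wp_half 0).congr fun τ _ ↦ e21_eq τ

lemma differentiableOn_e31 : DifferentiableOn ℂ e31 {τ : ℂ | 0 < τ.im} :=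
  (differentiableOn_wp_sub_wp_half (1 / 2)).congr fun τ _ ↦ e31_eq τ

lemma tendsto_e21 : Tendsto e21 (comap im atTop) (𝓝 (-(Real.pi : ℂ) ^ 2)) :=
  (tendsto_wp_sub_wp_half 0).congr fun τ ↦ (e21_eq τ).symm

lemma tendsto_e31 : Tendsto e31 (comap im atTop) (𝓝 (-(Real.pi : ℂ) ^ 2)) :=
  (tendsto_wp_sub_wp_half (1 / 2)).congr fun τ ↦ (e31_eq τ).symm

lemma hasDerivAt_e21 {τ : ℂ} (hτ : 0 < τ.im) : HasDerivAt e21 (deriv e21 τ) τ :=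
  ((differentiableOn_e21 τ hτ).differentiableAt (isOpen_im_pos.mem_nhds hτ)).hasDerivAt

lemma hasDerivAt_e31 {τ : ℂ} (hτ : 0 < τ.im) : HasDerivAt e31 (deriv e31 τ) τ :=
  ((differentiableOn_e31 τ hτ).differentiableAt (isOpen_im_pos.mem_nhds hτ)).hasDerivAt

lemma e21_add_one (τ : ℂ) : e21 (τ + 1) = e31 τ := by
  rw [e21, e31, e2_add_one, e1_add_one]

lemma e31_add_one {τ : ℂ} (hτ : 0 < τ.im) : e31 (τ + 1) = e21 τ := by
  rw [e21, e31, e3_add_one hτ, e1_add_one]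

lemma e21_neg_one_div {τ : ℂ} (hτ : 0 < τ.im) : e21 (-1 / τ) = -(τ ^ 2 * e21 τ) := by
  rw [e21, e21, e2_neg_one_div hτ, e1_neg_one_div hτ]
  ring

lemma e31_neg_one_div {τ : ℂ} (hτ : 0 < τ.im) : e31 (-1 / τ) = τ ^ 2 * (e31 τ - e21 τ) := by
  rw [e31, e31, e21, e3_neg_one_div hτ, e1_neg_one_div hτ]
  ring

lemma e21_add_two {τ : ℂ} (hτ : 0 < τ.im) : e21 (τ + 2) = e21 τ := by
  rw [← e31_add_one hτ, ← e21_add_one, add_assoc, one_add_one_eq_two]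

lemma e31_add_two {τ : ℂ} (hτ : 0 < τ.im) : e31 (τ + 2) = e31 τ := by
  rw [← e21_add_one τ, ← e31_add_one (τ := τ + 1) (by simpa using hτ), add_assoc,
    one_add_one_eq_two]

lemma deriv_e21_add_one (τ : ℂ) : deriv e21 (τ + 1) = deriv e31 τ := by
  rw [← deriv_comp_add_const]
  exact congrArg (deriv · τ) (funext e21_add_one)

lemma deriv_e31_add_one {τ : ℂ} (hτ : 0 < τ.im) : deriv e31 (τ + 1) = deriv e21 τ := by
  rw [← deriv_comp_add_const]
  refine EventuallyEq.deriv_eq ?_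
  filter_upwards [isOpen_im_pos.mem_nhds hτ] with σ hσ using e31_add_one hσ

lemma hasDerivAt_neg_one_div {τ : ℂ} (hτ : τ ≠ 0) :
    HasDerivAt (fun σ : ℂ ↦ -1 / σ) (1 / τ ^ 2) τ := by
  refine ((hasDerivAt_inv hτ).neg.congr_of_eventuallyEq ?_).congr_deriv ?_
  · exact .of_forall fun σ ↦ by simp [neg_div]
  · rw [neg_neg, one_div]

lemma deriv_e21_neg_one_div {τ : ℂ} (hτ : 0 < τ.im) :
    deriv e21 (-1 / τ) = -τ ^ 2 * (2 * τ * e21 τ + τ ^ 2 * deriv e21 τ) := by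
  have h0 : τ ≠ 0 := by rintro rfl; simp at hτ
  have h1 := (hasDerivAt_e21 (im_neg_one_div_pos hτ)).comp τ (hasDerivAt_neg_one_div h0)
  have h2 := ((hasDerivAt_pow 2 τ).mul (hasDerivAt_e21 hτ)).neg
  have h3 := h1.unique (h2.congr_of_eventuallyEq (by
    filter_upwards [isOpen_im_pos.mem_nhds hτ] with σ hσ using e21_neg_one_div hσ))
  rw [mul_one_div, div_eq_iff (pow_ne_zero 2 h0)] at h3
  rw [h3]
  push_cast
  ring

lemma deriv_e31_neg_one_div {τ : ℂ} (hτ : 0 < τ.im) :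
    deriv e31 (-1 / τ) =
      τ ^ 2 * (2 * τ * (e31 τ - e21 τ) + τ ^ 2 * (deriv e31 τ - deriv e21 τ)) := by
  have h0 : τ ≠ 0 := by rintro rfl; simp at hτ
  have h1 := (hasDerivAt_e31 (im_neg_one_div_pos hτ)).comp τ (hasDerivAt_neg_one_div h0)
  have h2 := (hasDerivAt_pow 2 τ).mul ((hasDerivAt_e31 hτ).sub (hasDerivAt_e21 hτ))
  have h3 := h1.unique (h2.congr_of_eventuallyEq (by
    filter_upwards [isOpen_im_pos.mem_nhds hτ] with σ hσ using e31_neg_one_div hσ))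
  rw [mul_one_div, div_eq_iff (pow_ne_zero 2 h0)] at h3
  rw [h3]
  simp only [Pi.sub_apply]
  push_cast
  ring

/-- The product of the differences of `e₁, e₂, e₃`. -/
noncomputable def diffProd (τ : ℂ) : ℂ := e21 τ * e31 τ * (e31 τ - e21 τ)

/-- The Wronskian of `e₂ - e₁` and `e₃ - e₁`. -/
noncomputable def diffWronskian (τ : ℂ) : ℂ := deriv e31 τ * e21 τ - e31 τ * deriv e21 τ

lemma differentiableOn_diffProd : DifferentiableOn ℂ diffProd {τ : ℂ | 0 < τ.im} :=
  (differentiableOn_e21.mul differentiableOn_e31).mul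
    (differentiableOn_e31.sub differentiableOn_e21)

lemma differentiableOn_diffWronskian : DifferentiableOn ℂ diffWronskian {τ : ℂ | 0 < τ.im} :=
  ((differentiableOn_e31.deriv isOpen_im_pos).mul differentiableOn_e21).sub
    (differentiableOn_e31.mul (differentiableOn_e21.deriv isOpen_im_pos))

lemma diffProd_add_one {τ : ℂ} (hτ : 0 < τ.im) : diffProd (τ + 1) = -diffProd τ := by
  rw [diffProd, diffProd, e21_add_one, e31_add_one hτ]
  ring

lemma diffWronskian_add_one {τ : ℂ} (hτ : 0 < τ.im) :
    diffWronskian (τ + 1) = -diffWronskian τ := by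
  rw [diffWronskian, diffWronskian, e21_add_one, e31_add_one hτ, deriv_e21_add_one,
    deriv_e31_add_one hτ]
  ring

lemma diffProd_neg_one_div {τ : ℂ} (hτ : 0 < τ.im) :
    diffProd (-1 / τ) = -(τ ^ 6 * diffProd τ) := by
  rw [diffProd, diffProd, e21_neg_one_div hτ, e31_neg_one_div hτ]
  ring

lemma diffWronskian_neg_one_div {τ : ℂ} (hτ : 0 < τ.im) :
    diffWronskian (-1 / τ) = -(τ ^ 6 * diffWronskian τ) := by
  rw [diffWronskian, diffWronskian, e21_neg_one_div hτ, e31_neg_one_div hτ,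
    deriv_e21_neg_one_div hτ, deriv_e31_neg_one_div hτ]
  ring

lemma tendsto_diffProd : Tendsto diffProd (comap im atTop) (𝓝 0) := by
  have h := (tendsto_e21.mul tendsto_e31).mul (tendsto_e31.sub tendsto_e21)
  rwa [sub_self, mul_zero] at h

open Function.Periodic in
lemma exists_tendsto_diffProd_diffWronskian_div_qParam : ∃ d : ℂ,
    Tendsto (fun τ ↦ diffProd τ / qParam 2 τ) (comap im atTop) (𝓝 (Real.pi ^ 4 * d)) ∧
    Tendsto (fun τ ↦ diffWronskian τ / qParam 2 τ) (comap im atTop)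
      (𝓝 (-(I * Real.pi ^ 3 * d))) := by
  obtain ⟨d₁, -, h₁⟩ := exists_tendsto_div_qParam differentiableOn_e21
    (fun τ hτ ↦ e21_add_two hτ) tendsto_e21
  have hg : Tendsto (fun τ ↦ e31 τ - e21 τ) (comap im atTop) (𝓝 0) := by
    simpa using tendsto_e31.sub tendsto_e21
  obtain ⟨d, h₂, h₃⟩ := exists_tendsto_div_qParam (differentiableOn_e31.sub differentiableOn_e21)
    (fun τ hτ ↦ by simp [e21_add_two hτ, e31_add_two hτ]) hg
  refine ⟨d, ?_, ?_⟩
  · have h := (tendsto_e21.mul tendsto_e31).mul h₂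
    have e : -(Real.pi : ℂ) ^ 2 * -(Real.pi : ℂ) ^ 2 * d = Real.pi ^ 4 * d := by ring
    rw [e] at h
    refine h.congr fun τ ↦ ?_
    simp only [diffProd, Pi.sub_apply]
    ring
  · have h := (h₃.mul tendsto_e21).sub (hg.mul h₁)
    have e : Real.pi * I * d * -(Real.pi : ℂ) ^ 2 - 0 * (Real.pi * I * d₁) =
      -(I * Real.pi ^ 3 * d) := by ring
    rw [e] at h
    refine h.congr' ?_
    filter_upwards [eventually_im_pos] with τ hτ
    rw [((hasDerivAt_e31 hτ).sub (hasDerivAt_e21 hτ)).deriv, diffWronskian]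
    ring

lemma tendsto_diffWronskian : Tendsto diffWronskian (comap im atTop) (𝓝 0) := by
  obtain ⟨d, -, h⟩ := exists_tendsto_diffProd_diffWronskian_div_qParam
  have h1 := h.mul ((Function.Periodic.qParam_tendsto two_pos).mono_right nhdsWithin_le_nhds)
  rw [mul_zero] at h1
  refine h1.congr fun τ ↦ ?_
  exact div_mul_cancel₀ _ (exp_ne_zero _)

lemma exists_diffProd_sq : ∃ c : ℂ, ∀ τ : UpperHalfPlane,
    diffProd τ ^ 2 = c * ModularForm.discriminant τ := by
  refine exists_eq_const_mul_discriminant (f := fun τ ↦ diffProd τ ^ 2)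
    (differentiableOn_diffProd.pow 2) (fun τ hτ ↦ ?_) (fun τ hτ ↦ ?_) ?_
  · simp only [diffProd_add_one hτ]
    ring
  · simp only [diffProd_neg_one_div hτ]
    ring
  · simpa using tendsto_diffProd.pow 2

lemma exists_diffWronskian_mul_diffProd : ∃ c : ℂ, ∀ τ : UpperHalfPlane,
    diffWronskian τ * diffProd τ = c * ModularForm.discriminant τ := by
  refine exists_eq_const_mul_discriminant (f := fun τ ↦ diffWronskian τ * diffProd τ)
    (differentiableOn_diffWronskian.mul differentiableOn_diffProd) (fun τ hτ ↦ ?_)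
    (fun τ hτ ↦ ?_) ?_
  · simp only [diffProd_add_one hτ, diffWronskian_add_one hτ]
    ring
  · simp only [diffProd_neg_one_div hτ, diffWronskian_neg_one_div hτ]
    ring
  · simpa using tendsto_diffWronskian.mul tendsto_diffProd

lemma neg_pi_sq_ne_zero : -(Real.pi : ℂ) ^ 2 ≠ 0 := by
  simp [Real.pi_ne_zero]

lemma exists_diffProd_ne_zero : ∃ τ : UpperHalfPlane, diffProd τ ≠ 0 := by
  by_contra! H
  have h1 : ∀ᶠ τ in comap im atTop, e31 τ - e21 τ = 0 := by
    filter_upwards [eventually_im_pos, tendsto_e21.eventually_ne neg_pi_sq_ne_zero,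
      tendsto_e31.eventually_ne neg_pi_sq_ne_zero] with τ hτ h21 h31
    have := H ⟨τ, hτ⟩
    simp only [diffProd] at this
    simpa [h21, h31] using this
  obtain ⟨s, hs, hs'⟩ := mem_comap.1 h1
  obtain ⟨y, hy⟩ := mem_atTop_sets.1 hs
  have hU : IsOpen {τ : ℂ | y < τ.im} := isOpen_lt continuous_const continuous_im
  have hz : ((|y| + 1 : ℝ) * I : ℂ).im = |y| + 1 := by simp
  have h2 : Set.EqOn (fun τ ↦ e31 τ - e21 τ) 0 {τ : ℂ | 0 < τ.im} := by
    refine ((differentiableOn_e31.sub differentiableOn_e21).analyticOnNhd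
      isOpen_im_pos).eqOn_zero_of_preconnected_of_eventuallyEq_zero
      (convex_halfSpace_im_gt 0).isPreconnected (z₀ := (|y| + 1 : ℝ) * I) ?_ ?_
    · change 0 < im _
      rw [hz]
      positivity
    · filter_upwards [hU.mem_nhds (by
        change y < im _
        rw [hz]
        exact (le_abs_self y).trans_lt (lt_add_one _))] with σ hσ
      exact hs' (hy _ (le_of_lt hσ))
  have h3 (τ : ℂ) (hτ : 0 < τ.im) : e31 τ = 0 := by
    have h0 : τ ≠ 0 := by rintro rfl; simp at hτ
    have := e31_neg_one_div (im_neg_one_div_pos hτ)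
    rw [show e31 _ - e21 _ = 0 from h2 (im_neg_one_div_pos hτ), mul_zero] at this
    rw [← this]
    congr 1
    field_simp
  exact neg_pi_sq_ne_zero (tendsto_nhds_unique tendsto_e31
    (tendsto_const_nhds.congr' (eventually_im_pos.mono fun τ hτ ↦ (h3 τ hτ).symm)))

lemma diffProd_ne_zero {τ : ℂ} (hτ : 0 < τ.im) : diffProd τ ≠ 0 := by
  obtain ⟨c, hc⟩ := exists_diffProd_sq
  obtain ⟨σ, hσ⟩ := exists_diffProd_ne_zero
  have hc0 : c ≠ 0 := by
    rintro rfl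
    have := hc σ
    simp [hσ] at this
  have := hc ⟨τ, hτ⟩
  intro h
  simp [h, hc0, ModularForm.discriminant_ne_zero] at this

open UpperHalfPlane in
lemma diffWronskian_eq {τ : ℂ} (hτ : 0 < τ.im) :
    diffWronskian τ = -(Complex.I / (Real.pi : ℂ)) * diffProd τ := by
  obtain ⟨c, hc⟩ := exists_diffProd_sq
  obtain ⟨c', hc'⟩ := exists_diffWronskian_mul_diffProd
  have hc0 : c ≠ 0 := by
    rintro rfl
    have := hc ⟨τ, hτ⟩
    simp [diffProd_ne_zero hτ] at this
  have hk (σ : ℂ) (hσ : 0 < σ.im) : diffWronskian σ = c' / c * diffProd σ := by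
    refine mul_right_cancel₀ (diffProd_ne_zero hσ) ?_
    have h1 := hc ⟨σ, hσ⟩
    have h2 := hc' ⟨σ, hσ⟩
    simp only at h1 h2
    rw [h2, mul_assoc, ← sq, h1]
    field_simp
  obtain ⟨d, hV, hW⟩ := exists_tendsto_diffProd_diffWronskian_div_qParam
  have hcoe : Tendsto ((↑) : ℍ → ℂ) atImInfty (comap Complex.im atTop) :=
    tendsto_comap_iff.2 tendsto_comap
  have hd : d ≠ 0 := by
    rintro rfl
    have h1 := (hV.comp hcoe).pow 2
    have h2 := ModularForm.tendsto_atImInfty_tprod_one_sub_eta_q_pow.const_mul c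
    rw [mul_one] at h2
    refine hc0 ((tendsto_nhds_unique h2 (h1.congr fun σ ↦ ?_)).trans (by simp))
    have hq : Function.Periodic.qParam 1 σ = Function.Periodic.qParam 2 σ ^ 2 := by
      rw [Function.Periodic.qParam, Function.Periodic.qParam, ← exp_nat_mul]
      congr 1
      push_cast
      ring
    have hq0 : Function.Periodic.qParam 2 σ ≠ 0 := exp_ne_zero _
    simp only [Function.comp_apply]
    rw [div_pow, hc, ModularForm.discriminant_eq_q_prod, hq]
    field_simp
  have hlim := tendsto_nhds_unique hW ((hV.const_mul (c' / c)).congr' (by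
    filter_upwards [eventually_im_pos] with σ hσ
    rw [hk σ hσ, mul_div_assoc]))
  have hpi : (Real.pi : ℂ) ≠ 0 := by simp [Real.pi_ne_zero]
  have hk' : c' / c = -(Complex.I / (Real.pi : ℂ)) := by
    refine mul_right_cancel₀ (mul_ne_zero (pow_ne_zero 4 hpi) hd) ?_
    rw [← hlim]
    field_simp
  rw [hk τ hτ, hk']

/-- formula (II-134): `t(τ) = (e₃-e₁)/(e₂-e₁)` is holomorphic on `ℍ` and
`dt/dτ = -(i/π) t(t-1)(e₂-e₁)`. -/
theorem tau_deriv_lambda_modular :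
    DifferentiableOn ℂ (fun τ => (e3 τ - e1 τ) / (e2 τ - e1 τ)) {τ : ℂ | 0 < τ.im} ∧
    ∀ τ : ℂ, 0 < τ.im →
      HasDerivAt (fun τ' => (e3 τ' - e1 τ') / (e2 τ' - e1 τ'))
        (-(Complex.I / (Real.pi : ℂ)) * ((e3 τ - e1 τ) / (e2 τ - e1 τ))
          * ((e3 τ - e1 τ) / (e2 τ - e1 τ) - 1) * (e2 τ - e1 τ)) τ := by
  have key (τ : ℂ) (hτ : 0 < τ.im) : HasDerivAt (fun τ' => (e3 τ' - e1 τ') / (e2 τ' - e1 τ'))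
        (-(Complex.I / (Real.pi : ℂ)) * ((e3 τ - e1 τ) / (e2 τ - e1 τ))
          * ((e3 τ - e1 τ) / (e2 τ - e1 τ) - 1) * (e2 τ - e1 τ)) τ := by
    have h0 : e21 τ ≠ 0 := fun h ↦ diffProd_ne_zero hτ (by simp [diffProd, h])
    refine ((hasDerivAt_e31 hτ).div (hasDerivAt_e21 hτ) h0).congr_deriv ?_
    change _ = -(I / (Real.pi : ℂ)) * (e31 τ / e21 τ) * (e31 τ / e21 τ - 1) * e21 τ
    have h := diffWronskian_eq hτ
    rw [diffWronskian] at h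
    rw [h, diffProd]
    field_simp
  exact ⟨fun τ hτ ↦ (key τ hτ).differentiableAt.differentiableWithinAt, key⟩
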